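/- Let R be a subring of ℝ containing ℤ, let G be a group, H ≤ G a subgroup, and V a normed R-module. Then ℓ∞(H,V) is a direct summand of ℓ∞(G,V) as an R[H]-module: there exists an R[H]-module homomorphism φ : ℓ∞(H,V) → ℓ∞(G,V) which is a section of the restriction map res : ℓ∞(G,V) → ℓ∞(H,V), f ↦ f|_H (i.e. res ∘ φ = id), where H acts on both modules by left translation. (Explicitly, for a right transversal T of H in G, φ(f)(ht) = f(h) for all h ∈ H, t ∈ T works.) -/

import Mathlib

set_option synthInstance.maxHeartbeats 1000000
set_option maxHeartbeats 1000000
noncomputable section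

/-- A norm on a module `V` over a subring `Q ≤ ℝ`, in the sense of the paper:
nonnegative, vanishing only at `0`, subadditive, and `‖r • v‖ ≤ |r| * ‖v‖`. -/
structure ModuleNorm (Q : Subring ℝ) (V : Type) [AddCommGroup V] [Module Q V] where
  nrm : V → ℝ
  nonneg : ∀ v, 0 ≤ nrm v
  eq_zero : ∀ v, nrm v = 0 → v = 0
  add_le : ∀ v w, nrm (v + w) ≤ nrm v + nrm w
  smul_le : ∀ (r : Q) (v : V), nrm (r • v) ≤ |(r : ℝ)| * nrm v

variable {Q : Subring ℝ} {V : Type} [AddCommGroup V] [Module Q V]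

/-- `ℓ∞(S, V)`: the `Q`-submodule of functions `S → V` with bounded image. -/
def boundedFns (N : ModuleNorm Q V) (S : Type) : Submodule Q (S → V) where
  carrier := {f | ∃ C : ℝ, ∀ s, N.nrm (f s) ≤ C}
  add_mem' := by
    rintro f g ⟨C, hC⟩ ⟨D, hD⟩
    exact ⟨C + D, fun s => (N.add_le _ _).trans (add_le_add (hC s) (hD s))⟩
  zero_mem' := ⟨N.nrm 0, fun _ => le_rfl⟩
  smul_mem' := by
    rintro r f ⟨C, hC⟩
    refine ⟨|(r : ℝ)| * C, fun s => (N.smul_le r (f s)).trans ?_⟩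
    exact mul_le_mul_of_nonneg_left (hC s) (abs_nonneg _)

/-- Left-translation action of a group element: `(g • f) x = f (g⁻¹ * x)`. -/
def lTranslate {G : Type} [Group G] (N : ModuleNorm Q V) (g : G)
    (f : boundedFns N G) : boundedFns N G :=
  ⟨fun x => (f : G → V) (g⁻¹ * x), by
    obtain ⟨C, hC⟩ := f.2
    exact ⟨C, fun s => hC _⟩⟩

/-- Left-translation action of a subgroup element `h ∈ H ≤ G` on `ℓ∞(G,V)`:
`(h • f) x = f (h⁻¹ * x)`. -/
def translateSub {G : Type} [Group G] {H : Subgroup G} (N : ModuleNorm Q V) (h : H)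
    (f : boundedFns N G) : boundedFns N G :=
  ⟨fun x => (f : G → V) ((h : G)⁻¹ * x), by
    obtain ⟨C, hC⟩ := f.2
    exact ⟨C, fun s => hC _⟩⟩

/-- The restriction map `ℓ∞(G,V) → ℓ∞(H,V)`, `f ↦ f|_H`. -/
def resFns {G : Type} [Group G] (N : ModuleNorm Q V) (H : Subgroup G)
    (f : boundedFns N G) : boundedFns N (H : Type) :=
  ⟨fun h => (f : G → V) (h : G), by
    obtain ⟨C, hC⟩ := f.2
    exact ⟨C, fun s => hC _⟩⟩

/-- A right transversal `T` containing `1` gives an `H`-equivariant retraction of `G` onto `H`,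
namely `h * t ↦ h` for `h ∈ H`, `t ∈ T`. -/
theorem exists_equivariant_retraction {G : Type} [Group G] (H : Subgroup G) :
    ∃ p : G → H, (∀ h : H, p (h : G) = h) ∧ ∀ (h : H) (x : G), p ((h : G) * x) = h * p x := by
  obtain ⟨T, hT, h1⟩ := H.exists_isComplement_right 1
  exact ⟨fun x => (hT.equiv x).1,
    fun h => hT.equiv_fst_eq_self_of_mem_of_one_mem h1 h.2,
    fun h x => congrArg Prod.fst (hT.equiv_mul_left h x)⟩

/-- for a subgroup `H ≤ G` and a normed `R`-module `V` (`ℤ ⊆ R ⊆ ℝ`),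
`ℓ∞(H,V)` is a direct summand of `ℓ∞(G,V)` as an `R[H]`-module: there is an `R`-linear,
`H`-equivariant section `φ` of the restriction map `ℓ∞(G,V) → ℓ∞(H,V)`. -/
theorem stmt_10 (Q : Subring ℝ) (V : Type) [AddCommGroup V] [Module Q V]
    (N : ModuleNorm Q V) (G : Type) [Group G] (H : Subgroup G) :
    ∃ φ : boundedFns N (H : Type) →ₗ[Q] boundedFns N G,
      (∀ f : boundedFns N (H : Type), resFns N H (φ f) = f) ∧
      (∀ (h : H) (f : boundedFns N (H : Type)),
        φ (lTranslate N h f) = translateSub N h (φ f)) := by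
  obtain ⟨p, hp, hmul⟩ := exists_equivariant_retraction H
  -- `φ` is precomposition with the retraction, so `p` being an equivariant retraction makes it
  -- an equivariant section of restriction.
  refine ⟨
    { toFun := fun f => ⟨fun x => (f : H → V) (p x), ?_⟩
      map_add' := fun _ _ => rfl
      map_smul' := fun _ _ => rfl }, fun f => ?_, fun h f => ?_⟩
  · obtain ⟨C, hC⟩ := f.2
    exact ⟨C, fun _ => hC _⟩
  · ext h
    exact congrArg (f : H → V) (hp h)
  · ext x
    exact congrArg (f : H → V) (hmul h⁻¹ x).symm
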